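/- Let G be a simple 2-connected graph with minimum degree δ and at least 3 vertices. Then G contains either a cycle of length at least 2δ or a Hamilton cycle. -/

import Mathlib

open SimpleGraph

/-- A graph is 2-connected: at least 3 vertices and deleting any one vertex
leaves a connected graph (no cut vertex). -/
def TwoConnected {V : Type*} [Fintype V] (G : SimpleGraph V) : Prop :=
  3 ≤ Fintype.card V ∧ ∀ v : V, (SimpleGraph.induce ({v}ᶜ : Set V) G).Connected

/-!
Let `P` be a longest path with ends `u` and `v`, so that all neighbours of `u` and of `v` lie on
`P`. Call `i < j` a crossing if `u` is adjacent to the `j`-th and `v` to the `i`-th vertex of `P`;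
then replacing the part of `P` between the two positions by these two edges gives a cycle. Take a
crossing with `j - i` minimal. If `j = i + 1`, the cycle has more vertices than any path has edges,
so by connectedness it is a Hamilton cycle. Otherwise no neighbour of `u` or `v` lies strictly
between the two positions, and no neighbour of `v` immediately precedes a neighbour of `u`; counting
the neighbours of `v` and the predecessors of the neighbours of `u` shows that the cycle has length
at least `deg u + deg v`.

If there is no crossing, `P` splits as `R₁ Q R₂` with `N(u) ⊆ R₁`, `N(v) ⊆ R₂` and `Q` running from
the last neighbour `a` of `u` to the first neighbour `b` of `v`. A cycle through `u` and `v`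
contains two disjoint paths from `R₁` to `R₂`, and rerouting them along `Q` makes `a` and `b`
endpoints. The other endpoint in `R₁` is joined to `a` by a path inside `R₁` through all neighbours
of `u`, and likewise in `R₂`. The four paths form a cycle of length at least `deg u + deg v`.
-/

section Walks

variable {V : Type*} {G : SimpleGraph V} {u v w x y : V}

theorem isPath_append_of_forall_eq {p : G.Walk u v} {q : G.Walk v w} (hp : p.IsPath)
    (hq : q.IsPath) (h : ∀ x ∈ p.support, x ∈ q.support → x = v) : (p.append q).IsPath := by
  rw [Walk.isPath_def, Walk.support_append, List.nodup_append']
  refine ⟨hp.support_nodup, hq.support_nodup.tail, fun x hxp hxq => ?_⟩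
  obtain rfl := h x hxp (List.mem_of_mem_tail hxq)
  have hnodup := hq.support_nodup
  rw [← Walk.cons_tail_support] at hnodup
  exact (List.nodup_cons.1 hnodup).1 hxq

theorem eq_of_isPath_append {p : G.Walk u v} {q : G.Walk v w} (h : (p.append q).IsPath)
    (hxp : x ∈ p.support) (hxq : x ∈ q.support) : x = v :=
  by_contra fun hne => h.ne_of_mem_support_of_append hne hxp hxq rfl

theorem isCycle_append_of_forall_eq_or_eq {p : G.Walk u v} {q : G.Walk v u} (hp : p.IsPath)
    (hq : q.IsPath) (h : ∀ x ∈ p.support, x ∈ q.support → x = u ∨ x = v)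
    (hlen : 1 < p.length ∨ 1 < q.length) : (p.append q).IsCycle := by
  refine hp.isCycle_append hq (fun x hxp hxq => ?_) hlen
  have hnodup_p := hp.support_nodup
  have hnodup_q := hq.support_nodup
  rw [← Walk.cons_tail_support, List.nodup_cons] at hnodup_p hnodup_q
  rcases h x (List.mem_of_mem_tail hxp) (List.mem_of_mem_tail hxq) with rfl | rfl
  · exact hnodup_p.1 hxp
  · exact hnodup_q.1 hxq

theorem eq_or_eq_of_isCycle_append {p : G.Walk u v} {q : G.Walk v u} (h : (p.append q).IsCycle)
    (hxp : x ∈ p.support) (hxq : x ∈ q.support) : x = u ∨ x = v := by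
  have hnodup := h.support_nodup
  rw [Walk.tail_support_append, List.nodup_append'] at hnodup
  by_contra! hne
  exact hnodup.2.2 ((p.mem_support_iff.1 hxp).resolve_left hne.1)
    ((q.mem_support_iff.1 hxq).resolve_left hne.2)

theorem card_le_length_add_one_of_subset_support {p : G.Walk u v} {S : Finset V}
    (hS : ∀ x ∈ S, x ∈ p.support) : S.card ≤ p.length + 1 := by
  classical
  calc S.card ≤ p.support.toFinset.card :=
        Finset.card_le_card fun x hx => List.mem_toFinset.2 (hS x hx)
    _ ≤ p.support.length := p.support.toFinset_card_le
    _ = p.length + 1 := p.length_support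

theorem disjoint_support_take_drop {P : G.Walk u v} {i j : ℕ} (hP : P.IsPath) (hij : i < j)
    (hj : j ≤ P.length) :
    (P.take i).support.Disjoint (P.drop j).support := by
  intro z hzi hzj
  obtain ⟨k, rfl, hk⟩ := Walk.mem_support_iff_exists_getVert.1 hzi
  obtain ⟨l, hkl, hl⟩ := Walk.mem_support_iff_exists_getVert.1 hzj
  rw [Walk.take_length] at hk
  rw [Walk.drop_length] at hl
  rw [Walk.drop_getVert, Walk.take_getVert] at hkl
  have := hP.getVert_injOn (show j + l ≤ P.length by omega) (show i ⊓ k ≤ P.length by omega) hkl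
  omega

theorem exists_append_eq_first_mem (w : G.Walk u v) {S : Set V} (hw : ∃ x ∈ w.support, x ∈ S) :
    ∃ z ∈ S, ∃ (p : G.Walk u z) (q : G.Walk z v), p.append q = w ∧
      ∀ x ∈ p.support, x ∈ S → x = z := by
  induction w with
  | nil =>
    simp only [Walk.support_nil, List.mem_singleton, exists_eq_left] at hw
    exact ⟨_, hw, .nil, .nil, rfl, by simp⟩
  | @cons u _ _ hadj w ih =>
    by_cases hu : u ∈ S
    · exact ⟨u, hu, .nil, .cons hadj w, rfl, by simp⟩
    · have htail : ∃ x ∈ w.support, x ∈ S := by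
        obtain ⟨x, hx, hxS⟩ := hw
        rw [Walk.support_cons, List.mem_cons] at hx
        exact ⟨x, hx.resolve_left fun hxu => hu (hxu ▸ hxS), hxS⟩
      obtain ⟨z, hz, p, q, rfl, hfirst⟩ := ih htail
      refine ⟨z, hz, .cons hadj p, q, rfl, fun x hx hxS => ?_⟩
      rw [Walk.support_cons, List.mem_cons] at hx
      exact hfirst x (hx.resolve_left fun hxu => hu (hxu ▸ hxS)) hxS

theorem exists_append_eq_last_mem (w : G.Walk u v) {S : Set V} (hw : ∃ x ∈ w.support, x ∈ S) :
    ∃ z ∈ S, ∃ (p : G.Walk u z) (q : G.Walk z v), p.append q = w ∧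
      ∀ x ∈ q.support, x ∈ S → x = z := by
  obtain ⟨z, hz, p, q, hpq, hlast⟩ := exists_append_eq_first_mem w.reverse (by simpa using hw)
  refine ⟨z, hz, q.reverse, p.reverse, ?_, by simpa using hlast⟩
  rw [← Walk.reverse_append, hpq, Walk.reverse_reverse]

theorem exists_isPath_of_isCycle {c : G.Walk w w} (hc : c.IsCycle) (hx : x ∈ c.support)
    (hxw : x ≠ w) (hu : u ∈ c.support) :
    ∃ p : G.Walk w x, p.IsPath ∧ p.support ⊆ c.support ∧ u ∈ p.support := by
  obtain ⟨p, q, rfl⟩ := Walk.mem_support_iff_exists_append.1 hx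
  rcases (Walk.mem_support_append_iff p q).1 hu with hup | huq
  · exact ⟨p, hc.isPath_of_append_left (Walk.not_nil_of_ne hxw),
      p.support_subset_support_append_left q, hup⟩
  · refine ⟨q.reverse, (hc.isPath_of_append_right (Walk.not_nil_of_ne hxw.symm)).reverse, ?_, ?_⟩
    · simp
    · simpa using huq

/- The path runs from `t` back to `x`, jumps to the first neighbour of `x` after `t`, and follows
`R` from there on. -/
theorem exists_isPath_forall_adj_mem_support {R : G.Walk x y} {t : V} (hR : R.IsPath)
    (hxy : G.Adj x y) (ht : t ∈ R.support) (hty : t ≠ y) :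
    ∃ p : G.Walk t y, p.IsPath ∧ p.support ⊆ R.support ∧ x ∈ p.support ∧
      ∀ z ∈ R.support, G.Adj x z → z ∈ p.support := by
  obtain ⟨R₁, R', hR₁, hR', rfl⟩ := hR.mem_support_iff_exists_append.1 ht
  cases R' with
  | nil => exact absurd rfl hty
  | cons hadj R' =>
    obtain ⟨z, hxz, M, R₂, rfl, hfirst⟩ :=
      exists_append_eq_first_mem R' (S := {z | G.Adj x z}) ⟨y, R'.end_mem_support, hxy⟩
    obtain ⟨hMR₂, htR'⟩ := (Walk.cons_isPath_iff _ _).1 hR'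
    have hdisj : ∀ r ∈ R₁.support, r ∉ R₂.support := by
      intro r hr₁ hr₂
      obtain rfl := eq_of_isPath_append hR hr₁ (by simp [hr₂])
      exact htR' (by simp [hr₂])
    have hxR₂ : (Walk.cons hxz R₂).IsPath :=
      hMR₂.of_append_right.cons (hdisj x R₁.start_mem_support)
    refine ⟨R₁.reverse.append (.cons hxz R₂), ?_, ?_, by simp, fun r hr hxr => ?_⟩
    · refine isPath_append_of_forall_eq hR₁.reverse hxR₂ fun r hr₁ hr₂ => ?_
      rw [Walk.support_reverse, List.mem_reverse] at hr₁
      rw [Walk.support_cons, List.mem_cons] at hr₂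
      exact hr₂.resolve_right (hdisj r hr₁)
    · intro r
      simp only [Walk.mem_support_append_iff, Walk.support_reverse, List.mem_reverse,
        Walk.support_cons, List.mem_cons]
      rintro (hr | rfl | hr)
      · exact .inl hr
      · exact .inl R₁.start_mem_support
      · exact .inr (.inr (.inr hr))
    · simp only [Walk.mem_support_append_iff, Walk.support_reverse, List.mem_reverse,
        Walk.support_cons, List.mem_cons] at hr ⊢
      rcases hr with hr | rfl | hr | hr
      · exact .inl hr
      · exact .inl R₁.end_mem_support
      · obtain rfl := hfirst r hr hxr
        exact .inr (.inr R₂.start_mem_support)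
      · exact .inr (.inr hr)

theorem exists_isPath_degree_le_length [Fintype (G.neighborSet x)] {R : G.Walk x y} {t : V}
    (hR : R.IsPath) (hxy : G.Adj x y) (hx : ∀ z, G.Adj x z → z ∈ R.support)
    (ht : t ∈ R.support) (hty : t ≠ y) :
    ∃ p : G.Walk t y, p.IsPath ∧ p.support ⊆ R.support ∧ G.degree x ≤ p.length := by
  classical
  obtain ⟨p, hp, hpR, hxp, hcover⟩ := exists_isPath_forall_adj_mem_support hR hxy ht hty
  have hcard : (insert x (G.neighborFinset x)).card ≤ p.length + 1 := by
    refine card_le_length_add_one_of_subset_support fun z hz => ?_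
    rcases Finset.mem_insert.1 hz with rfl | hxz
    · exact hxp
    · rw [mem_neighborFinset] at hxz
      exact hcover z (hx z hxz) hxz
  rw [Finset.card_insert_of_notMem (by simp), card_neighborFinset_eq_degree] at hcard
  exact ⟨p, hp, hpR, by omega⟩

theorem exists_isPath_degree_le_length_of_eq_or_eq [Fintype (G.neighborSet x)] {R : G.Walk x y}
    {s t : V} (hR : R.IsPath) (hxy : G.Adj x y) (hx : ∀ z, G.Adj x z → z ∈ R.support)
    (hs : s ∈ R.support) (ht : t ∈ R.support) (hst : s ≠ t) (hy : s = y ∨ t = y) :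
    ∃ p : G.Walk s t, p.IsPath ∧ p.support ⊆ R.support ∧ G.degree x ≤ p.length := by
  rcases hy with rfl | rfl
  · obtain ⟨p, hp, hpR, hlen⟩ := exists_isPath_degree_le_length hR hxy hx ht hst.symm
    exact ⟨p.reverse, hp.reverse, fun z hz => hpR (by simpa using hz), by simpa using hlen⟩
  · exact exists_isPath_degree_le_length hR hxy hx hs hst

end Walks

section Linkages

variable {V : Type*} {G : SimpleGraph V} {A B : Set V} {s t x y a b : V}

/-- An `A`-`B` path: a path whose only vertex in `A` is its start and whose only vertex in `B` is
its end. -/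
structure IsPathBetween (A B : Set V) (p : G.Walk s x) : Prop where
  isPath : p.IsPath
  start_mem : s ∈ A
  end_mem : x ∈ B
  eq_start : ∀ z ∈ p.support, z ∈ A → z = s
  eq_end : ∀ z ∈ p.support, z ∈ B → z = x

theorem IsPathBetween.reverse {p : G.Walk s x} (hp : IsPathBetween A B p) :
    IsPathBetween B A p.reverse where
  isPath := hp.isPath.reverse
  start_mem := hp.end_mem
  end_mem := hp.start_mem
  eq_start z hz := hp.eq_end z (by simpa using hz)
  eq_end z hz := hp.eq_start z (by simpa using hz)

theorem exists_isPathBetween_of_isPath {w : G.Walk a b} (hw : w.IsPath) (ha : a ∈ A)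
    (hb : b ∈ B) :
    ∃ (s x : V) (p : G.Walk s x), IsPathBetween A B p ∧ p.support ⊆ w.support := by
  obtain ⟨x, hx, w₁, w₂, rfl, hfirst⟩ :=
    exists_append_eq_first_mem w ⟨b, w.end_mem_support, hb⟩
  obtain ⟨s, hs, w₀, p, rfl, hlast⟩ :=
    exists_append_eq_last_mem w₁ ⟨a, w₁.start_mem_support, ha⟩
  refine ⟨s, x, p, ⟨hw.of_append_left.of_append_right, hs, hx, hlast,
    fun z hz => hfirst z (by simp [hz])⟩, fun z hz => by simp [hz]⟩

theorem IsPathBetween.notMem_support_of_forall_adj_mem {p : G.Walk s x} (hp : IsPathBetween A B p)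
    (haA : a ∈ A) (haB : a ∉ B) (hadj : ∀ z, G.Adj a z → z ∈ A) : a ∉ p.support := by
  intro hap
  obtain rfl := hp.eq_start a hap haA
  cases p with
  | nil => exact haB hp.end_mem
  | cons haz q => exact haz.ne' (hp.eq_start _ (by simp) (hadj _ haz))

theorem IsPathBetween.append_of_append {z : V} {p₁ : G.Walk s z} {p₂ : G.Walk z x}
    {q₁ : G.Walk a z} {q₂ : G.Walk z b} (hp : IsPathBetween A B (p₁.append p₂))
    (hq : IsPathBetween A B (q₁.append q₂))
    (hz : ∀ r ∈ q₁.support, r ∈ (p₁.append p₂).support → r = z) :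
    IsPathBetween A B (q₁.append p₂) where
  isPath := isPath_append_of_forall_eq hq.isPath.of_append_left hp.isPath.of_append_right
    fun r hr hr' => hz r hr (by simp [hr'])
  start_mem := hq.start_mem
  end_mem := hp.end_mem
  eq_start r hr hrA := by
    rcases (Walk.mem_support_append_iff _ _).1 hr with hr | hr
    · exact hq.eq_start r (by simp [hr]) hrA
    · obtain rfl := hp.eq_start r (by simp [hr]) hrA
      obtain rfl := eq_of_isPath_append hp.isPath p₁.start_mem_support hr
      exact hq.eq_start r (by simp) hrA
  eq_end r hr hrB := by
    rcases (Walk.mem_support_append_iff _ _).1 hr with hr | hr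
    · obtain rfl := hq.eq_end r (by simp [hr]) hrB
      obtain rfl := eq_of_isPath_append hq.isPath hr q₂.end_mem_support
      exact hp.eq_end r (by simp) hrB
    · exact hp.eq_end r (by simp [hr]) hrB

/-- A linkage of `A` and `B` of size two: a pair of vertex-disjoint `A`-`B` paths. -/
structure IsLinkage (A B : Set V) (p : G.Walk s x) (q : G.Walk t y) : Prop where
  left : IsPathBetween A B p
  right : IsPathBetween A B q
  disjoint : p.support.Disjoint q.support

namespace IsLinkage

variable {p : G.Walk s x} {q : G.Walk t y}

theorem symm (h : IsLinkage A B p q) : IsLinkage A B q p :=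
  ⟨h.right, h.left, h.disjoint.symm⟩

theorem reverse (h : IsLinkage A B p q) : IsLinkage B A p.reverse q.reverse :=
  ⟨h.left.reverse, h.right.reverse, by
    simpa only [Walk.support_reverse, List.disjoint_reverse_left, List.disjoint_reverse_right]
      using h.disjoint⟩

theorem ne_start (h : IsLinkage A B p q) : s ≠ t := by
  rintro rfl
  exact h.disjoint p.start_mem_support q.start_mem_support

theorem ne_end (h : IsLinkage A B p q) : x ≠ y := by
  rintro rfl
  exact h.disjoint p.end_mem_support q.end_mem_support

/- Follow `Q` from `a` until it first meets `p` or `q`, then continue along that path. -/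
theorem exists_start_eq (h : IsLinkage A B p q) {Q : G.Walk a b} (hQ : IsPathBetween A B Q)
    (hmeet : ∃ z ∈ Q.support, z ∈ p.support ∨ z ∈ q.support) :
    ∃ (x' t' y' : V) (p' : G.Walk a x') (q' : G.Walk t' y'),
      IsLinkage A B p' q' ∧ (x' = x ∨ y' = x) := by
  obtain ⟨z, hz, Q₁, Q₂, rfl, hfirst⟩ :=
    exists_append_eq_first_mem Q (S := {z | z ∈ p.support ∨ z ∈ q.support}) hmeet
  have reroute : ∀ {s x t y : V} {p : G.Walk s x} {q : G.Walk t y}, IsLinkage A B p q →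
      z ∈ p.support → (∀ r ∈ Q₁.support, r ∈ p.support ∨ r ∈ q.support → r = z) →
      ∃ p' : G.Walk a x, IsLinkage A B p' q := by
    intro s x t y p q h hzp hfirst
    obtain ⟨p₁, p₂, rfl⟩ := Walk.mem_support_iff_exists_append.1 hzp
    refine ⟨Q₁.append p₂, h.left.append_of_append hQ fun r hr hrp => hfirst r hr (.inl hrp),
      h.right, fun r hr hrq => h.disjoint (a := r) ?_ hrq⟩
    rcases (Walk.mem_support_append_iff _ _).1 hr with hr | hr
    · exact hfirst r hr (.inr hrq) ▸ hzp
    · simp [hr]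
  rcases hz with hzp | hzq
  · obtain ⟨p', h'⟩ := reroute h hzp hfirst
    exact ⟨x, t, y, p', q, h', .inl rfl⟩
  · obtain ⟨p', h'⟩ := reroute h.symm hzq fun r hr hr' => hfirst r hr hr'.symm
    exact ⟨y, s, x, p', p, h', .inr rfl⟩

theorem exists_start_eq_end_eq (h : IsLinkage A B p q) {Q : G.Walk a b}
    (hQ : IsPathBetween A B Q) :
    ∃ (s' t' y' : V) (p' : G.Walk s' b) (q' : G.Walk t' y'),
      IsLinkage A B p' q' ∧ (s' = a ∨ t' = a) := by
  by_cases hmeet : ∃ z ∈ Q.support, z ∈ p.support ∨ z ∈ q.support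
  · obtain ⟨x', t', y', p', q', h', -⟩ := h.exists_start_eq hQ hmeet
    obtain ⟨s', y₂, t₂, p₂, q₂, h₂, ha⟩ :=
      h'.reverse.exists_start_eq hQ.reverse ⟨a, by simp, .inl (by simp)⟩
    exact ⟨s', t₂, y₂, p₂.reverse, q₂.reverse, h₂.reverse, ha⟩
  · push Not at hmeet
    exact ⟨a, t, y, Q, q, ⟨hQ, h.right, fun r hr => (hmeet r hr).2⟩, .inl rfl⟩

theorem isCycle_append (h : IsLinkage A B p q) {X : G.Walk s t} {Y : G.Walk x y}
    (hX : X.IsPath) (hY : Y.IsPath) (hXA : ∀ z ∈ X.support, z ∈ A) (hYB : ∀ z ∈ Y.support, z ∈ B)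
    (hAB : ∀ z ∈ A, z ∈ B → z ∈ p.support ∨ z ∈ q.support) (hlen : 1 < X.length) :
    ((X.append q).append (Y.reverse.append p.reverse)).IsCycle := by
  have hXq : (X.append q).IsPath := isPath_append_of_forall_eq hX h.right.isPath
    fun z hzX hzq => h.right.eq_start z hzq (hXA z hzX)
  have hYp : (Y.reverse.append p.reverse).IsPath := by
    refine isPath_append_of_forall_eq hY.reverse h.left.isPath.reverse fun z hzY hzp => ?_
    rw [Walk.support_reverse, List.mem_reverse] at hzY hzp
    exact h.left.eq_end z hzp (hYB z hzY)
  refine isCycle_append_of_forall_eq_or_eq hXq hYp (fun z hz₁ hz₂ => ?_)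
    (.inl (by rw [Walk.length_append]; omega))
  simp only [Walk.mem_support_append_iff, Walk.support_reverse, List.mem_reverse] at hz₁ hz₂
  rcases hz₁ with hzX | hzq <;> rcases hz₂ with hzY | hzp
  · rcases hAB z (hXA z hzX) (hYB z hzY) with hzp | hzq
    · exact .inl (h.left.eq_start z hzp (hXA z hzX))
    · exact .inr (h.right.eq_end z hzq (hYB z hzY))
  · exact .inl (h.left.eq_start z hzp (hXA z hzX))
  · exact .inr (h.right.eq_end z hzq (hYB z hzY))
  · exact absurd hzq (h.disjoint hzp)

end IsLinkage

end Linkages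

namespace TwoConnected

variable {V : Type*} [Fintype V] {G : SimpleGraph V} {u v w x y : V}

theorem exists_walk_notMem_support (h : TwoConnected G) (hx : x ≠ v) (hy : y ≠ v) :
    ∃ p : G.Walk x y, v ∉ p.support := by
  obtain ⟨p⟩ := (h.2 v).preconnected ⟨x, hx⟩ ⟨y, hy⟩
  have hv : v ∉ (p.map (Embedding.induce _).toHom).support := by
    rw [Walk.support_map, List.mem_map]
    rintro ⟨z, -, hz⟩
    exact z.2 hz
  exact ⟨_, hv⟩

theorem exists_ne_ne (h : TwoConnected G) (x y : V) : ∃ z, z ≠ x ∧ z ≠ y := by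
  classical
  have hcard : ({x, y} : Finset V).card < (Finset.univ : Finset V).card :=
    Finset.card_le_two.trans_lt h.1
  obtain ⟨z, -, hz⟩ := Finset.exists_mem_notMem_of_card_lt_card hcard
  exact ⟨z, by simpa [not_or] using hz⟩

theorem connected (h : TwoConnected G) : G.Connected := by
  have : Nonempty V := Fintype.card_pos_iff.1 (Nat.zero_lt_of_lt h.1)
  refine ⟨fun x y => ?_⟩
  obtain ⟨z, hzx, hzy⟩ := h.exists_ne_ne x y
  obtain ⟨p, -⟩ := h.exists_walk_notMem_support hzx.symm hzy.symm
  exact ⟨p⟩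

theorem exists_adj_ne (h : TwoConnected G) (hvw : v ≠ w) : ∃ u, G.Adj v u ∧ u ≠ w := by
  obtain ⟨z, hzv, hzw⟩ := h.exists_ne_ne v w
  obtain ⟨p, hp⟩ := h.exists_walk_notMem_support hvw hzw
  refine ⟨p.snd, p.adj_snd (Walk.not_nil_of_ne hzv.symm), fun hw => hp ?_⟩
  exact hw ▸ p.getVert_mem_support 1

theorem exists_adj_adj_ne (h : TwoConnected G) (v : V) :
    ∃ x y, G.Adj v x ∧ G.Adj v y ∧ x ≠ y := by
  obtain ⟨z, hz, -⟩ := h.exists_ne_ne v v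
  obtain ⟨x, hx, -⟩ := h.exists_adj_ne hz.symm
  obtain ⟨y, hy, hyx⟩ := h.exists_adj_ne hx.ne
  exact ⟨x, y, hx, hy, hyx.symm⟩

theorem two_le_degree (h : TwoConnected G) (v : V) [Fintype (G.neighborSet v)] :
    2 ≤ G.degree v := by
  obtain ⟨x, y, hx, hy, hxy⟩ := h.exists_adj_adj_ne v
  rw [← card_neighborFinset_eq_degree]
  exact Finset.one_lt_card.2 ⟨x, by simpa using hx, y, by simpa using hy, hxy⟩

theorem exists_isCycle (h : TwoConnected G) (v : V) : ∃ c : G.Walk v v, c.IsCycle := by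
  classical
  obtain ⟨x, y, hx, hy, hxy⟩ := h.exists_adj_adj_ne v
  obtain ⟨p, hp⟩ := h.exists_walk_notMem_support hx.ne' hy.ne'
  have hcons : (Walk.cons hx p.bypass).IsPath :=
    p.bypass_isPath.cons fun hv => hp (p.support_bypass_subset_support hv)
  have hlen : 0 < p.bypass.length := Walk.not_nil_iff_lt_length.1 (Walk.not_nil_of_ne hxy)
  exact ⟨_, isCycle_append_of_forall_eq_or_eq hcons hy.symm.isPath_toWalk
    (fun z _ hz => by simpa [or_comm] using hz) (.inl (by simpa using hlen))⟩

theorem exists_isCycle_of_adj (h : TwoConnected G) {c : G.Walk w w} (hc : c.IsCycle)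
    (hu : u ∈ c.support) (hvw : G.Adj v w) : ∃ c' : G.Walk v v, c'.IsCycle ∧ u ∈ c'.support := by
  classical
  by_cases hv : v ∈ c.support
  · exact ⟨c.rotate v hv, hc.rotate hv, by simpa using hu⟩
  obtain ⟨r, hr⟩ := h.exists_walk_notMem_support hvw.ne (c.adj_snd hc.not_nil).ne'
  obtain ⟨z, hz, T, T', hTT', hfirst⟩ :=
    exists_append_eq_first_mem r.bypass (S := {z | z ∈ c.support})
      ⟨_, r.bypass.end_mem_support, c.getVert_mem_support 1⟩
  have hT : T.IsPath := (hTT' ▸ r.bypass_isPath).of_append_left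
  have hwT : w ∉ T.support := fun hw =>
    hr (r.support_bypass_subset_support (hTT' ▸ T.support_subset_support_append_left T' hw))
  have hzw : z ≠ w := fun hzw => hwT (hzw ▸ T.end_mem_support)
  obtain ⟨D, hD, hDc, huD⟩ := exists_isPath_of_isCycle hc hz hzw hu
  have hvD : (Walk.cons hvw D).IsPath := hD.cons fun hvD => hv (hDc hvD)
  have hlen : 0 < D.length := Walk.not_nil_iff_lt_length.1 (Walk.not_nil_of_ne hzw.symm)
  refine ⟨(Walk.cons hvw D).append T.reverse,
    isCycle_append_of_forall_eq_or_eq hvD hT.reverse (fun r hr hrT => ?_)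
      (.inl (by simpa using hlen)), by simp [huD]⟩
  rw [Walk.support_reverse, List.mem_reverse] at hrT
  rw [Walk.support_cons, List.mem_cons] at hr
  exact hr.imp_right fun hrD => hfirst r hrT (hDc hrD)

theorem exists_isCycle_mem_support (h : TwoConnected G) (u v : V) :
    ∃ c : G.Walk v v, c.IsCycle ∧ u ∈ c.support := by
  obtain ⟨p⟩ := h.connected.preconnected v u
  induction p with
  | nil =>
    obtain ⟨c, hc⟩ := h.exists_isCycle _
    exact ⟨c, hc, c.start_mem_support⟩
  | cons hadj _ ih =>
    obtain ⟨c, hc, hu⟩ := ih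
    exact h.exists_isCycle_of_adj hc hu hadj

theorem exists_isPath_isPath_forall_eq_or_eq (h : TwoConnected G) (huv : u ≠ v) :
    ∃ p q : G.Walk u v, p.IsPath ∧ q.IsPath ∧
      ∀ z ∈ p.support, z ∈ q.support → z = u ∨ z = v := by
  obtain ⟨c, hc, hv⟩ := h.exists_isCycle_mem_support v u
  obtain ⟨p, q, rfl⟩ := Walk.mem_support_iff_exists_append.1 hv
  exact ⟨p, q.reverse, hc.isPath_of_append_left (Walk.not_nil_of_ne huv.symm),
    (hc.isPath_of_append_right (Walk.not_nil_of_ne huv)).reverse,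
    fun z hzp hzq => eq_or_eq_of_isCycle_append hc hzp (by simpa using hzq)⟩

theorem exists_isLinkage (h : TwoConnected G) {A B : Set V} (huA : u ∈ A) (huB : u ∉ B)
    (hu : ∀ z, G.Adj u z → z ∈ A) (hvA : v ∉ A) (hvB : v ∈ B) (hv : ∀ z, G.Adj v z → z ∈ B) :
    ∃ (s x t y : V) (p : G.Walk s x) (q : G.Walk t y), IsLinkage A B p q := by
  obtain ⟨P, Q, hP, hQ, hPQ⟩ := h.exists_isPath_isPath_forall_eq_or_eq (u := u) (v := v)
    fun huv => huB (huv ▸ hvB)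
  obtain ⟨s, x, p, hp, hpP⟩ := exists_isPathBetween_of_isPath hP huA hvB
  obtain ⟨t, y, q, hq, hqQ⟩ := exists_isPathBetween_of_isPath hQ huA hvB
  have hup : u ∉ p.support := hp.notMem_support_of_forall_adj_mem huA huB hu
  have hvp : v ∉ p.support := by
    simpa using hp.reverse.notMem_support_of_forall_adj_mem hvB hvA hv
  refine ⟨s, x, t, y, p, q, hp, hq, fun z hzp hzq => ?_⟩
  rcases hPQ z (hpP hzp) (hqQ hzq) with rfl | rfl
  · exact hup hzp
  · exact hvp hzp

end TwoConnected

section Crossings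

variable {V : Type*} {G : SimpleGraph V} {u v : V} {P : G.Walk u v} {i j : ℕ}

/-- A longest path of the graph. -/
structure IsLongestPath (P : G.Walk u v) : Prop where
  isPath : P.IsPath
  length_le : ∀ {x y : V} (p : G.Walk x y), p.IsPath → p.length ≤ P.length

theorem exists_isLongestPath (G : SimpleGraph V) [Nonempty V] [Finite G.edgeSet] :
    ∃ (u v : V) (P : G.Walk u v), IsLongestPath P := by
  obtain ⟨u, v, P, hP, hmax⟩ := Walk.exists_isPath_forall_isPath_length_le_length G
  exact ⟨u, v, P, hP, fun p hp => hmax _ _ p hp⟩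

namespace IsLongestPath

theorem reverse (hP : IsLongestPath P) : IsLongestPath P.reverse :=
  ⟨hP.isPath.reverse, fun p hp => P.length_reverse.symm ▸ hP.length_le p hp⟩

theorem mem_support_of_adj_start (hP : IsLongestPath P) (z : V) (hz : G.Adj u z) :
    z ∈ P.support := by
  by_contra hzP
  have hlen := hP.length_le _ (hP.isPath.cons hzP (h := hz.symm))
  rw [Walk.length_cons] at hlen
  omega

theorem mem_support_of_adj_end (hP : IsLongestPath P) (z : V) (hz : G.Adj v z) :
    z ∈ P.support := by
  simpa using hP.reverse.mem_support_of_adj_start z hz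

/- Cutting a cycle that misses a vertex `y` open next to an edge leaving the cycle towards `y`
gives a path with at least as many edges as the cycle. -/
theorem isHamiltonian_of_length_lt [Fintype V] [DecidableEq V] (hP : IsLongestPath P)
    (hG : G.Connected) {w : V} {c : G.Walk w w} (hc : c.IsCycle) (hlen : P.length < c.length) :
    G.IsHamiltonian := by
  have hspan : ∀ y, y ∈ c.support := by
    by_contra! ⟨y, hy⟩
    obtain ⟨r⟩ := hG.preconnected w y
    obtain ⟨d, -, hd, hd'⟩ :=
      r.exists_boundary_dart {z | z ∈ c.support} c.start_mem_support hy
    have hcd : (c.rotate d.fst hd).IsCycle := hc.rotate hd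
    have hsnd : d.snd ∉ (c.rotate d.fst hd).tail.support := fun h => hd' <| by
      rw [Walk.support_tail_of_not_nil _ hcd.not_nil] at h
      simpa using List.mem_of_mem_tail h
    have hle := hP.length_le _ (hcd.isPath_tail.concat hsnd d.adj)
    rw [Walk.length_concat, Walk.length_tail_add_one hcd.not_nil, Walk.length_rotate] at hle
    omega
  refine fun _ => ⟨w, c, hc, hc.isPath_tail.isHamiltonian_of_mem fun y => ?_⟩
  rw [Walk.support_tail_of_not_nil _ hc.not_nil]
  rcases c.mem_support_iff.1 (hspan y) with rfl | hy
  · exact c.end_mem_tail_support hc.not_nil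
  · exact hy

end IsLongestPath

/-- A crossing of a walk `P` from `u` to `v`: positions `i < j` on `P` such that `u` is adjacent to
the `j`-th and `v` to the `i`-th vertex of `P`. -/
structure IsCrossing (P : G.Walk u v) (i j : ℕ) : Prop where
  lt : i < j
  le_length : j ≤ P.length
  adj_start : G.Adj u (P.getVert j)
  adj_end : G.Adj v (P.getVert i)

namespace IsCrossing

theorem exists_isCycle (h : IsCrossing P i j) (hP : P.IsPath)
    (hlen : 2 < (i + 1) + (P.length + 1 - j)) :
    ∃ c : G.Walk u u, c.IsCycle ∧ c.length = (i + 1) + (P.length + 1 - j) := by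
  obtain ⟨hij, hj, hu, hv⟩ := h
  have hdisj := disjoint_support_take_drop hP hij hj
  have hp : ((P.take i).concat hv.symm).IsPath :=
    (hP.take i).concat (fun h => hdisj h (P.drop j).end_mem_support) hv.symm
  have hq : ((P.drop j).reverse.concat hu.symm).IsPath :=
    (hP.drop j).reverse.concat
      (fun h => hdisj (P.take i).start_mem_support (by simpa using h)) hu.symm
  have hpl : ((P.take i).concat hv.symm).length = i + 1 := by
    rw [Walk.length_concat, Walk.take_length, min_eq_left (hij.le.trans hj)]
  have hql : ((P.drop j).reverse.concat hu.symm).length = P.length + 1 - j := by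
    rw [Walk.length_concat, Walk.length_reverse, Walk.drop_length]
    omega
  refine ⟨_, isCycle_append_of_forall_eq_or_eq hp hq (fun z hzp hzq => ?_) (by omega),
    by rw [Walk.length_append, hpl, hql]⟩
  rw [Walk.support_concat, List.mem_append, List.mem_singleton] at hzp hzq
  rw [Walk.support_reverse, List.mem_reverse] at hzq
  rcases hzp with hzp | hzv
  · exact .inl (hzq.resolve_left fun hzq => hdisj hzp hzq)
  · exact .inr hzv

end IsCrossing

theorem exists_isCrossing_forall_sub_le_sub (hcross : ∃ i j, IsCrossing P i j) :
    ∃ i j, IsCrossing P i j ∧ ∀ k l, IsCrossing P k l → j - i ≤ l - k := by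
  obtain ⟨i₀, j₀, h₀⟩ := hcross
  obtain ⟨⟨i, j⟩, hij, hmin⟩ := exists_minimalFor_of_wellFoundedLT
    (fun ij : ℕ × ℕ => IsCrossing P ij.1 ij.2) (fun ij => ij.2 - ij.1) ⟨(i₀, j₀), h₀⟩
  exact ⟨i, j, hij, fun k l hkl => (le_total (l - k) (j - i)).elim (hmin (j := (k, l)) hkl) id⟩

theorem degree_start_le_card_filter [Fintype (G.neighborSet u)]
    [DecidablePred fun k => G.Adj u (P.getVert (k + 1))]
    (hu : ∀ z, G.Adj u z → z ∈ P.support) :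
    G.degree u ≤ ((Finset.range P.length).filter fun k => G.Adj u (P.getVert (k + 1))).card := by
  classical
  rw [← card_neighborFinset_eq_degree]
  refine (Finset.card_le_card (t := Finset.image (fun k => P.getVert (k + 1)) _)
    fun z hz => ?_).trans Finset.card_image_le
  rw [mem_neighborFinset] at hz
  obtain ⟨_ | k, rfl, hk⟩ := Walk.mem_support_iff_exists_getVert.1 (hu z hz)
  · simp at hz
  · exact Finset.mem_image.2 ⟨k, Finset.mem_filter.2 ⟨Finset.mem_range.2 hk, hz⟩, rfl⟩

theorem degree_end_le_card_filter [Fintype (G.neighborSet v)]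
    [DecidablePred fun k => G.Adj v (P.getVert k)]
    (hv : ∀ z, G.Adj v z → z ∈ P.support) :
    G.degree v ≤ ((Finset.range P.length).filter fun k => G.Adj v (P.getVert k)).card := by
  classical
  rw [← card_neighborFinset_eq_degree]
  refine (Finset.card_le_card (t := Finset.image P.getVert _)
    fun z hz => ?_).trans Finset.card_image_le
  rw [mem_neighborFinset] at hz
  obtain ⟨k, rfl, hk⟩ := Walk.mem_support_iff_exists_getVert.1 (hv z hz)
  obtain rfl | hk := hk.eq_or_lt
  · simp at hz
  · exact Finset.mem_image.2 ⟨k, Finset.mem_filter.2 ⟨Finset.mem_range.2 hk, hz⟩, rfl⟩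

theorem IsCrossing.degree_add_degree_le [Fintype (G.neighborSet u)] [Fintype (G.neighborSet v)]
    (h : IsCrossing P i j) (hu : ∀ z, G.Adj u z → z ∈ P.support)
    (hv : ∀ z, G.Adj v z → z ∈ P.support)
    (hmin : ∀ k l, IsCrossing P k l → j - i ≤ l - k) (hij : i + 1 < j) :
    G.degree u + G.degree v ≤ (i + 1) + (P.length + 1 - j) := by
  classical
  have hj := h.le_length
  set Nu := (Finset.range P.length).filter fun k => G.Adj u (P.getVert (k + 1))
  set Nv := (Finset.range P.length).filter fun k => G.Adj v (P.getVert k)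
  have hdisj : Disjoint Nu Nv := by
    refine Finset.disjoint_filter.2 fun k hk huk hvk => ?_
    have := hmin k (k + 1) ⟨by omega, by simpa using hk, huk, hvk⟩
    omega
  have hNu : Nu ⊆ Finset.range (i + 1) ∪ Finset.Ico (j - 1) P.length := by
    intro k hk
    simp only [Nu, Finset.mem_union, Finset.mem_filter, Finset.mem_range, Finset.mem_Ico] at hk ⊢
    by_contra hgap
    have := hmin i (k + 1) ⟨by omega, by omega, hk.2, h.adj_end⟩
    omega
  have hNv : Nv ⊆ Finset.range (i + 1) ∪ Finset.Ico (j - 1) P.length := by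
    intro k hk
    simp only [Nv, Finset.mem_union, Finset.mem_filter, Finset.mem_range, Finset.mem_Ico] at hk ⊢
    by_contra hgap
    have := hmin k j ⟨by omega, hj, h.adj_start, hk.2⟩
    omega
  calc G.degree u + G.degree v ≤ Nu.card + Nv.card :=
        add_le_add (degree_start_le_card_filter hu) (degree_end_le_card_filter hv)
    _ = (Nu ∪ Nv).card := (Finset.card_union_of_disjoint hdisj).symm
    _ ≤ (Finset.range (i + 1) ∪ Finset.Ico (j - 1) P.length).card :=
        Finset.card_le_card (Finset.union_subset hNu hNv)
    _ ≤ (i + 1) + (P.length - (j - 1)) :=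
        (Finset.card_union_le _ _).trans_eq (by rw [Finset.card_range, Nat.card_Ico])
    _ = (i + 1) + (P.length + 1 - j) := by omega

theorem exists_append_append_eq_of_forall_not_isCrossing
    (hu : ∀ z, G.Adj u z → z ∈ P.support) (hv : ∀ z, G.Adj v z → z ∈ P.support)
    (hu' : ∃ z, G.Adj u z) (hv' : ∃ z, G.Adj v z) (hcross : ∀ i j, ¬ IsCrossing P i j) :
    ∃ (a b : V) (R₁ : G.Walk u a) (Q : G.Walk a b) (R₂ : G.Walk b v),
      R₁.append (Q.append R₂) = P ∧ G.Adj u a ∧ G.Adj v b ∧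
      (∀ z, G.Adj u z → z ∈ R₁.support) ∧ ∀ z, G.Adj v z → z ∈ R₂.support := by
  obtain ⟨z, hz⟩ := hu'
  obtain ⟨a, hua, R₁, P', rfl, hlast⟩ :=
    exists_append_eq_last_mem P (S := {z | G.Adj u z}) ⟨z, hu z hz, hz⟩
  have hvP' : ∀ z, G.Adj v z → z ∈ P'.support := by
    intro z hz
    rcases (Walk.mem_support_append_iff _ _).1 (hv z hz) with hz₁ | hz'
    · obtain ⟨k, rfl, hk⟩ := Walk.mem_support_iff_exists_getVert.1 hz₁
      obtain rfl | hk := hk.eq_or_lt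
      · simp
      · refine absurd ⟨hk, by simp, ?_, ?_⟩ (hcross k R₁.length)
        · simpa [Walk.getVert_append] using hua
        · simpa [Walk.getVert_append, hk] using hz
    · exact hz'
  obtain ⟨z, hz⟩ := hv'
  obtain ⟨b, hvb, Q, R₂, rfl, hfirst⟩ :=
    exists_append_eq_first_mem P' (S := {z | G.Adj v z}) ⟨z, hvP' z hz, hz⟩
  refine ⟨a, b, R₁, Q, R₂, rfl, hua, hvb, fun z hz => ?_, fun z hz => ?_⟩
  · rcases (Walk.mem_support_append_iff _ _).1 (hu z hz) with hz₁ | hz'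
    · exact hz₁
    · exact hlast z hz' hz ▸ R₁.end_mem_support
  · rcases (Walk.mem_support_append_iff _ _).1 (hvP' z hz) with hzQ | hz₂
    · exact hfirst z hzQ hz ▸ R₂.start_mem_support
    · exact hz₂

end Crossings

namespace TwoConnected

variable {V : Type*} [Fintype V] {G : SimpleGraph V} {u v : V} {P : G.Walk u v}

theorem exists_isCycle_or_isHamiltonian_of_isCrossing [DecidableEq V] [Fintype (G.neighborSet u)]
    [Fintype (G.neighborSet v)] (h : TwoConnected G) (hP : IsLongestPath P)
    (hcross : ∃ i j, IsCrossing P i j) :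
    (∃ (w : V) (c : G.Walk w w), c.IsCycle ∧ G.degree u + G.degree v ≤ c.length) ∨
      G.IsHamiltonian := by
  classical
  obtain ⟨i, j, hij, hmin⟩ := exists_isCrossing_forall_sub_le_sub hcross
  have hlt := hij.lt
  have hj := hij.le_length
  have hu := h.two_le_degree u
  have hv := h.two_le_degree v
  obtain rfl | hlt := (Nat.succ_le_of_lt hlt).eq_or_lt
  · have hlen : G.degree u ≤ P.length :=
      (degree_start_le_card_filter hP.mem_support_of_adj_start).trans
        ((Finset.card_filter_le _ _).trans_eq (Finset.card_range _))
    obtain ⟨c, hc, hcl⟩ := hij.exists_isCycle hP.isPath (by omega)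
    exact .inr (hP.isHamiltonian_of_length_lt h.connected hc (by omega))
  · have hdeg := hij.degree_add_degree_le hP.mem_support_of_adj_start hP.mem_support_of_adj_end
      hmin hlt
    obtain ⟨c, hc, hcl⟩ := hij.exists_isCycle hP.isPath (by omega)
    exact .inl ⟨u, c, hc, hdeg.trans_eq hcl.symm⟩

theorem exists_isCycle_of_forall_adj_mem_support [Fintype (G.neighborSet u)]
    [Fintype (G.neighborSet v)] (h : TwoConnected G) {a b : V} {R₁ : G.Walk u a} {Q : G.Walk a b}
    {R₂ : G.Walk b v} (hP : (R₁.append (Q.append R₂)).IsPath) (hua : G.Adj u a)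
    (hvb : G.Adj v b) (hu : ∀ z, G.Adj u z → z ∈ R₁.support)
    (hv : ∀ z, G.Adj v z → z ∈ R₂.support) :
    ∃ (w : V) (c : G.Walk w w), c.IsCycle ∧ G.degree u + G.degree v ≤ c.length := by
  have hQ : (Q.append R₂).IsPath := hP.of_append_right
  have hR₁₂ : ∀ z, z ∈ R₁.support → z ∈ R₂.support → z = b := fun z hz₁ hz₂ => by
    obtain rfl := eq_of_isPath_append hP hz₁ (by simp [hz₂])
    exact eq_of_isPath_append hQ Q.start_mem_support hz₂
  have huR₂ : u ∉ R₂.support := fun hu₂ =>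
    hua.ne (eq_of_isPath_append hP R₁.start_mem_support (by simp [hu₂]))
  have hvR₁ : v ∉ R₁.support := fun hv₁ => hvb.ne (hR₁₂ v hv₁ R₂.end_mem_support)
  have hQ' : IsPathBetween {z | z ∈ R₁.support} {z | z ∈ R₂.support} Q :=
    ⟨hQ.of_append_left, R₁.end_mem_support, R₂.start_mem_support,
      fun z hzQ hz₁ => eq_of_isPath_append hP hz₁ (by simp [hzQ]),
      fun z hzQ hz₂ => eq_of_isPath_append hQ hzQ hz₂⟩
  obtain ⟨_, _, _, _, _, _, hlink⟩ :=
    h.exists_isLinkage (A := {z | z ∈ R₁.support}) (B := {z | z ∈ R₂.support})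
      R₁.start_mem_support huR₂ hu hvR₁ R₂.end_mem_support hv
  obtain ⟨s, t, y, p, q, hpq, ha⟩ := hlink.exists_start_eq_end_eq hQ'
  obtain ⟨X, hX, hXR₁, hXlen⟩ := exists_isPath_degree_le_length_of_eq_or_eq
    hP.of_append_left hua hu hpq.left.start_mem hpq.right.start_mem hpq.ne_start ha
  obtain ⟨Y, hY, hYR₂, hYlen⟩ := exists_isPath_degree_le_length_of_eq_or_eq
    hQ.of_append_right.reverse hvb (by simpa using hv) (by simp)
    (R₂.support_reverse ▸ List.mem_reverse.2 hpq.right.end_mem) hpq.ne_end (.inl rfl)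
  have hcycle := hpq.isCycle_append hX hY (fun z hz => hXR₁ hz)
    (fun z hz => List.mem_reverse.1 (R₂.support_reverse ▸ hYR₂ hz))
    (fun z hz₁ hz₂ => .inl (hR₁₂ z hz₁ hz₂ ▸ p.end_mem_support))
    ((h.two_le_degree u).trans hXlen)
  refine ⟨s, _, hcycle, ?_⟩
  simp only [Walk.length_append, Walk.length_reverse]
  omega

theorem exists_isCycle_of_forall_not_isCrossing [Fintype (G.neighborSet u)]
    [Fintype (G.neighborSet v)] (h : TwoConnected G) (hP : P.IsPath)
    (hu : ∀ z, G.Adj u z → z ∈ P.support) (hv : ∀ z, G.Adj v z → z ∈ P.support)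
    (hcross : ∀ i j, ¬ IsCrossing P i j) :
    ∃ (w : V) (c : G.Walk w w), c.IsCycle ∧ G.degree u + G.degree v ≤ c.length := by
  obtain ⟨x, _, hux, -⟩ := h.exists_adj_adj_ne u
  obtain ⟨y, _, hvy, -⟩ := h.exists_adj_adj_ne v
  obtain ⟨a, b, R₁, Q, R₂, rfl, hua, hvb, hu₁, hv₂⟩ :=
    exists_append_append_eq_of_forall_not_isCrossing hu hv ⟨x, hux⟩ ⟨y, hvy⟩ hcross
  exact h.exists_isCycle_of_forall_adj_mem_support hP hua hvb hu₁ hv₂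

end TwoConnected

/-- Dirac's theorem: a simple 2-connected graph with minimum degree δ and at least 3
vertices contains a cycle of length at least 2δ or a Hamilton cycle. -/
theorem stmt_0 {V : Type*} [Fintype V] [DecidableEq V] (G : SimpleGraph V) [DecidableRel G.Adj]
    (h2 : TwoConnected G) (h3 : 3 ≤ Fintype.card V) :
    (∃ (v : V) (c : G.Walk v v), c.IsCycle ∧ 2 * G.minDegree ≤ c.length) ∨
      G.IsHamiltonian := by
  have : Nonempty V := h2.connected.nonempty
  obtain ⟨u, v, P, hP⟩ := exists_isLongestPath G
  have hδ : 2 * G.minDegree ≤ G.degree u + G.degree v := by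
    linarith [G.minDegree_le_degree u, G.minDegree_le_degree v]
  by_cases hcross : ∃ i j, IsCrossing P i j
  · exact (h2.exists_isCycle_or_isHamiltonian_of_isCrossing hP hcross).imp_left
      fun ⟨w, c, hc, hlen⟩ => ⟨w, c, hc, hδ.trans hlen⟩
  · push Not at hcross
    obtain ⟨w, c, hc, hlen⟩ := h2.exists_isCycle_of_forall_not_isCrossing hP.isPath
      hP.mem_support_of_adj_start hP.mem_support_of_adj_end hcross
    exact .inl ⟨w, c, hc, hδ.trans hlen⟩
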